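/- Let p > 3 be a prime. Then ∑_{k=1}^{(p-1)/2} (p/2 - k)·H_k·H_{2k}/((p+1-2k)(p+2k)) ≡ 2·q_p(2) - (5/2)·q_p(2)^2 + (1/2)·q_p(2)^3 + (5/16)·B_{p-3} modulo p (as rational numbers). -/

import Mathlib

/-- Two rationals `a` and `b` are congruent modulo `p^r`:
the `p`-adic valuation of `a - b` is at least `r`, i.e. `a - b = c * p^r`
with the denominator of `c` not divisible by `p`. -/
def ratCongr (p r : ℕ) (a b : ℚ) : Prop :=
  ∃ c : ℚ, a - b = c * (p : ℚ) ^ r ∧ ¬ (p ∣ c.den)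

/-- The Fermat quotient `q_p(2) = (2^(p-1) - 1)/p` (an integer for odd primes),
viewed as a rational number. -/
def fermatQ (p : ℕ) : ℚ := ((2 : ℚ) ^ (p - 1) - 1) / p

open Finset

/-- Nested harmonic-type sum with letters listed from the largest index to the smallest. -/
def nestedSum {R : Type*} [Semiring R] : List (ℕ → R) → ℕ → R
  | [], _ => 1
  | f :: l, N => ∑ i ∈ range N, f i * nestedSum l i

/-- The letter `i ↦ ε ^ i / i ^ s` with values modulo `p`; it vanishes at `i = 0` for `s ≠ 0`. -/
def altInv (p : ℕ) (s : ℕ) (ε : ZMod p) (i : ℕ) : ZMod p := ε ^ i * ((i : ZMod p)⁻¹) ^ s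

section Stuffle
variable {R : Type*} [CommRing R]

theorem nestedSum_nil (N : ℕ) : nestedSum ([] : List (ℕ → R)) N = 1 := rfl

theorem nestedSum_cons_zero (f : ℕ → R) (l : List (ℕ → R)) : nestedSum (f :: l) 0 = 0 := by
  simp [nestedSum]

theorem nestedSum_cons_succ (f : ℕ → R) (l : List (ℕ → R)) (N : ℕ) :
    nestedSum (f :: l) (N + 1) = nestedSum (f :: l) N + f N * nestedSum l N := by
  simp [nestedSum, sum_range_succ]

theorem nestedSum_stuffle_one_one (u f : ℕ → R) (N : ℕ) :
    nestedSum [u] N * nestedSum [f] N =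
      nestedSum [u, f] N + nestedSum [f, u] N + nestedSum [u * f] N := by
  induction N with
  | zero => simp [nestedSum_cons_zero]
  | succ N ih =>
    simp only [nestedSum_cons_succ, nestedSum_nil, Pi.mul_apply]
    linear_combination ih

theorem nestedSum_stuffle_one_two (u g f : ℕ → R) (N : ℕ) :
    nestedSum [u] N * nestedSum [g, f] N =
      nestedSum [u, g, f] N + nestedSum [g, u, f] N + nestedSum [g, f, u] N +
        nestedSum [u * g, f] N + nestedSum [g, u * f] N := by
  induction N with
  | zero => simp [nestedSum_cons_zero]
  | succ N ih =>
    simp only [nestedSum_cons_succ, nestedSum_nil, Pi.mul_apply]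
    linear_combination ih + g N * nestedSum_stuffle_one_one u f N
end Stuffle

section Shuffle
variable {p : ℕ}

theorem altInv_mul (s t : ℕ) (ε δ : ZMod p) :
    altInv p s ε * altInv p t δ = altInv p (s + t) (ε * δ) := by
  funext i
  simp only [altInv, Pi.mul_apply]
  ring

variable [hp : Fact p.Prime]

theorem altInv_zero (s : ℕ) (hs : s ≠ 0) (ε : ZMod p) : altInv p s ε 0 = 0 := by
  simp [altInv, hs]

theorem natCast_ne_zero_of_lt {m : ℕ} (h0 : 0 < m) (hm : m < p) : (m : ZMod p) ≠ 0 := by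
  rw [Ne, ZMod.natCast_eq_zero_iff]
  exact Nat.not_dvd_of_pos_of_lt h0 hm

theorem sum_range_eq_sum_Ico_one {R : Type*} [AddCommMonoid R] (f : ℕ → R) (h : f 0 = 0) (m : ℕ) :
    ∑ i ∈ range m, f i = ∑ i ∈ Ico 1 m, f i := by
  cases m with
  | zero => simp
  | succ m => rw [range_eq_Ico, sum_eq_sum_Ico_succ_bot (by omega), h, zero_add]

/-- Partial fractions `1 / (l * (m - l)) = (1 / m) * (1 / l + 1 / (m - l))`, summed over `l`. -/
theorem sum_altInv_mul_altInv_sub {ε δ : ZMod p} (hε : ε ^ 2 = 1) (hδ : δ ^ 2 = 1)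
    (U : ℕ → ZMod p) {m : ℕ} (hm : m < p) :
    ∑ l ∈ range m, altInv p 1 ε l * (altInv p 1 δ (m - l) * U (m - l)) =
      altInv p 1 ε m * ∑ k ∈ range m, altInv p 1 (ε * δ) k * U k +
        altInv p 1 δ m * ∑ l ∈ range m, altInv p 1 (ε * δ) l * U (m - l) := by
  have h0 : ∀ e : ZMod p, altInv p 1 e 0 = 0 := altInv_zero 1 one_ne_zero
  rw [sum_range_eq_sum_Ico_one _ (by simp [h0]), sum_range_eq_sum_Ico_one _ (by simp [h0]),
    sum_range_eq_sum_Ico_one _ (by simp [h0])]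
  rcases Nat.eq_zero_or_pos m with rfl | hm0
  · simp
  have hr := sum_Ico_reflect (fun k => altInv p 1 (ε * δ) k * U k) 1 (m := m) (n := m) (by omega)
  rw [show m + 1 - m = 1 by omega, show m + 1 - 1 = m by omega] at hr
  rw [← hr, mul_sum, mul_sum, ← sum_add_distrib]
  refine sum_congr rfl fun l hl => ?_
  rw [mem_Ico] at hl
  obtain ⟨k, rfl⟩ : ∃ k, m = l + k := ⟨m - l, by omega⟩
  have hl0 := natCast_ne_zero_of_lt (p := p) (m := l) (by omega) (by omega)
  have hk0 := natCast_ne_zero_of_lt (p := p) (m := k) (by omega) (by omega)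
  have hlk := natCast_ne_zero_of_lt (p := p) (m := l + k) (by omega) hm
  rw [show l + k - l = k by omega]
  simp only [altInv, mul_pow, pow_add, pow_one]
  have e1 : ε ^ k * ε ^ k = 1 := by rw [← mul_pow, ← sq, hε, one_pow]
  have e2 : δ ^ l * δ ^ l = 1 := by rw [← mul_pow, ← sq, hδ, one_pow]
  push_cast at hlk ⊢
  have hpf : (l : ZMod p)⁻¹ * (k : ZMod p)⁻¹ =
      ((l : ZMod p) + k)⁻¹ * (k : ZMod p)⁻¹ + ((l : ZMod p) + k)⁻¹ * (l : ZMod p)⁻¹ := by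
    field_simp
  linear_combination ε ^ l * δ ^ k * U k * hpf -
    ε ^ l * δ ^ k * U k * ((l : ZMod p) + k)⁻¹ * (k : ZMod p)⁻¹ * e1 -
    ε ^ l * δ ^ k * U k * ((l : ZMod p) + k)⁻¹ * (l : ZMod p)⁻¹ * e2

theorem sum_altInv_mul_sum_range_sub {ε δ : ZMod p} (hε : ε ^ 2 = 1) (hδ : δ ^ 2 = 1)
    (U : ℕ → ZMod p) {N : ℕ} (hN : N ≤ p) :
    ∑ l ∈ range N, altInv p 1 ε l * ∑ k ∈ range (N - l), altInv p 1 δ k * U k =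
      ∑ m ∈ range N, altInv p 1 ε m * ∑ k ∈ range m, altInv p 1 (ε * δ) k * U k +
      ∑ m ∈ range N, altInv p 1 δ m * ∑ l ∈ range m, altInv p 1 (ε * δ) l * U (m - l) := by
  induction N with
  | zero => simp
  | succ N ih =>
    rw [sum_range_succ _ N, sum_range_succ _ N, sum_range_succ _ N]
    have h1 : ∀ l ∈ range N, altInv p 1 ε l * ∑ k ∈ range (N + 1 - l), altInv p 1 δ k * U k =
        altInv p 1 ε l * ∑ k ∈ range (N - l), altInv p 1 δ k * U k +
          altInv p 1 ε l * (altInv p 1 δ (N - l) * U (N - l)) := by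
      intro l hl
      rw [mem_range] at hl
      rw [show N + 1 - l = (N - l) + 1 by omega, sum_range_succ, mul_add]
    rw [sum_congr rfl h1, sum_add_distrib, ih (by omega),
      sum_altInv_mul_altInv_sub hε hδ U (by omega)]
    simp only [Nat.add_sub_cancel_left, sum_range_one, altInv_zero 1 one_ne_zero]
    ring

/-- The substitution `l ↦ p - l`. -/
theorem sum_altInv_mul_comp_sub (hp2 : p ≠ 2) {ε : ZMod p} (hε : ε ^ 2 = 1) (X : ℕ → ZMod p) :
    ∑ l ∈ range p, altInv p 1 ε l * X (p - l) = -ε * ∑ l ∈ range p, altInv p 1 ε l * X l := by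
  have h0 : ∀ e : ZMod p, altInv p 1 e 0 = 0 := altInv_zero 1 one_ne_zero
  rw [sum_range_eq_sum_Ico_one _ (by simp [h0]), sum_range_eq_sum_Ico_one _ (by simp [h0])]
  have hr := sum_Ico_reflect (fun k => altInv p 1 ε k * X k) 1 (m := p) (n := p) (by omega)
  rw [show p + 1 - p = 1 by omega, show p + 1 - 1 = p by omega] at hr
  rw [← hr, mul_sum]
  refine sum_congr rfl fun l hl => ?_
  rw [mem_Ico] at hl
  have e1 : ε ^ l = ε * ε ^ (p - l) := by
    obtain ⟨n, hn⟩ := hp.out.odd_of_ne_two hp2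
    have h1 : ε ^ l * ε ^ (p - l) = ε := by
      rw [← pow_add, show l + (p - l) = 2 * n + 1 by omega, pow_succ, pow_mul, hε]
      simp
    have h2 : ε ^ (p - l) * ε ^ (p - l) = 1 := by rw [← mul_pow, ← sq, hε, one_pow]
    linear_combination ε ^ (p - l) * h1 - ε ^ l * h2
  simp only [altInv, pow_one]
  rw [e1, Nat.cast_sub hl.2.le, ZMod.natCast_self, zero_sub, inv_neg]
  ring

theorem sum_altInv_mul_nestedSum_sub {ε δ : ZMod p} (hε : ε ^ 2 = 1) (hδ : δ ^ 2 = 1)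
    {N : ℕ} (hN : N ≤ p) :
    ∑ l ∈ range N, altInv p 1 ε l * nestedSum [altInv p 1 δ] (N - l) =
      nestedSum [altInv p 1 ε, altInv p 1 (ε * δ)] N +
        nestedSum [altInv p 1 δ, altInv p 1 (ε * δ)] N :=
  sum_altInv_mul_sum_range_sub hε hδ (fun _ => 1) hN

theorem nestedSum_shuffle_one_one (hp2 : p ≠ 2) {ε δ : ZMod p} (hε : ε ^ 2 = 1) (hδ : δ ^ 2 = 1) :
    -ε * nestedSum [altInv p 1 ε, altInv p 1 δ] p =
      nestedSum [altInv p 1 ε, altInv p 1 (ε * δ)] p +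
        nestedSum [altInv p 1 δ, altInv p 1 (ε * δ)] p := by
  rw [← sum_altInv_mul_nestedSum_sub hε hδ le_rfl, sum_altInv_mul_comp_sub hp2 hε]
  rfl

theorem nestedSum_shuffle_one_two (hp2 : p ≠ 2) {ε δ γ : ZMod p}
    (hε : ε ^ 2 = 1) (hδ : δ ^ 2 = 1) (hγ : γ ^ 2 = 1) :
    -ε * nestedSum [altInv p 1 ε, altInv p 1 δ, altInv p 1 γ] p =
      nestedSum [altInv p 1 ε, altInv p 1 (ε * δ), altInv p 1 γ] p +
        nestedSum [altInv p 1 δ, altInv p 1 (ε * δ), altInv p 1 (ε * δ * γ)] p +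
        nestedSum [altInv p 1 δ, altInv p 1 γ, altInv p 1 (ε * δ * γ)] p := by
  have h := sum_altInv_mul_sum_range_sub hε hδ (nestedSum [altInv p 1 γ]) le_rfl
  rw [sum_altInv_mul_comp_sub hp2 hε
    (fun n => ∑ k ∈ range n, altInv p 1 δ k * nestedSum [altInv p 1 γ] k)] at h
  refine h.trans ?_
  rw [add_assoc]
  refine congrArg₂ (· + ·) rfl ?_
  simp only [nestedSum.eq_2 _ (altInv p 1 δ), ← sum_add_distrib, ← mul_add]
  refine sum_congr rfl fun m hm => ?_
  rw [sum_altInv_mul_nestedSum_sub (by rw [mul_pow, hε, hδ, one_mul]) hγ (mem_range.1 hm).le]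

theorem nestedSum_shuffle_square (hp2 : p ≠ 2) {ε δ : ZMod p} (hε : ε ^ 2 = 1) (hδ : δ ^ 2 = 1) :
    -ε * nestedSum [altInv p 1 ε, altInv p 2 δ] p =
      nestedSum [altInv p 1 ε, altInv p 2 (ε * δ)] p +
        nestedSum [altInv p 2 ε, altInv p 1 (ε * δ)] p +
        nestedSum [altInv p 2 δ, altInv p 1 (ε * δ)] p := by
  have hsq : ∀ (e : ZMod p) (k : ℕ), altInv p 1 e k * (k : ZMod p)⁻¹ = altInv p 2 e k * 1 := by
    intro e k
    simp only [altInv]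
    ring
  have h := sum_altInv_mul_sum_range_sub hε hδ (fun k => (k : ZMod p)⁻¹) le_rfl
  rw [sum_altInv_mul_comp_sub hp2 hε
    (fun n => ∑ k ∈ range n, altInv p 1 δ k * (k : ZMod p)⁻¹)] at h
  simp only [hsq] at h
  refine h.trans ?_
  rw [add_assoc]
  refine congrArg₂ (· + ·) rfl ?_
  simp only [nestedSum.eq_2 _ (altInv p 2 _), ← sum_add_distrib]
  refine sum_congr rfl fun m hm => ?_
  have h2 := sum_altInv_mul_altInv_sub (ε := ε * δ) (δ := 1) (by rw [mul_pow, hε, hδ, one_mul])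
    (by ring) (fun _ => 1) (mem_range.1 hm)
  have h3 : ∀ k, altInv p 1 1 k = (k : ZMod p)⁻¹ := by simp [altInv]
  simp only [h3, mul_one] at h2
  have h4 : nestedSum [altInv p 1 (ε * δ)] m = ∑ l ∈ range m, altInv p 1 (ε * δ) l := by
    simp [nestedSum]
  rw [h2, h4]
  simp only [altInv, mul_pow]
  have e2 : δ ^ m * δ ^ m = 1 := by rw [← mul_pow, ← sq, hδ, one_pow]
  linear_combination (ε ^ m * (m : ZMod p)⁻¹ ^ 2 *
    ∑ l ∈ range m, ε ^ l * δ ^ l * (l : ZMod p)⁻¹ ^ 1) * e2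
end Shuffle

section Reduction
variable {p : ℕ} [hp : Fact p.Prime]

/-- `x` is `p`-integral with residue class `y`. -/
def ReducesTo (p : ℕ) [Fact p.Prime] (x : ℚ) (y : ZMod p) : Prop :=
  ∃ a b : ℤ, (b : ZMod p) ≠ 0 ∧ x = a / b ∧ y = a / b

namespace ReducesTo
variable {x x' : ℚ} {y y' : ZMod p}

theorem intCast_ne_zero {b : ℤ} (hb : (b : ZMod p) ≠ 0) : (b : ℚ) ≠ 0 := by
  rintro h
  rw [Int.cast_eq_zero] at h
  simp [h] at hb

theorem intCast (a : ℤ) : ReducesTo p a a := ⟨a, 1, by simp, by simp, by simp⟩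

theorem natCast (a : ℕ) : ReducesTo p a a := by exact_mod_cast intCast (p := p) (a : ℤ)

theorem zero : ReducesTo p 0 0 := by exact_mod_cast natCast (p := p) 0

theorem one : ReducesTo p 1 1 := by exact_mod_cast natCast (p := p) 1

theorem ofNat (n : ℕ) [n.AtLeastTwo] :
    ReducesTo p (OfNat.ofNat n : ℚ) (OfNat.ofNat n : ZMod p) := by
  exact_mod_cast natCast (p := p) n

theorem add (h : ReducesTo p x y) (h' : ReducesTo p x' y') : ReducesTo p (x + x') (y + y') := by
  obtain ⟨a, b, hb, rfl, rfl⟩ := h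
  obtain ⟨c, d, hd, rfl, rfl⟩ := h'
  have hb' := intCast_ne_zero hb
  have hd' := intCast_ne_zero hd
  refine ⟨a * d + b * c, b * d, by push_cast; exact mul_ne_zero hb hd, ?_, ?_⟩ <;>
  · push_cast
    field_simp

theorem mul (h : ReducesTo p x y) (h' : ReducesTo p x' y') : ReducesTo p (x * x') (y * y') := by
  obtain ⟨a, b, hb, rfl, rfl⟩ := h
  obtain ⟨c, d, hd, rfl, rfl⟩ := h'
  refine ⟨a * c, b * d, by push_cast; exact mul_ne_zero hb hd, ?_, ?_⟩ <;>
  · push_cast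
    rw [div_mul_div_comm]

theorem neg (h : ReducesTo p x y) : ReducesTo p (-x) (-y) := by
  simpa using (intCast (p := p) (-1)).mul h

theorem sub (h : ReducesTo p x y) (h' : ReducesTo p x' y') : ReducesTo p (x - x') (y - y') := by
  simpa only [sub_eq_add_neg] using h.add h'.neg

theorem inv (h : ReducesTo p x y) (hy : y ≠ 0) : ReducesTo p x⁻¹ y⁻¹ := by
  obtain ⟨a, b, hb, rfl, rfl⟩ := h
  refine ⟨b, a, fun ha => hy (by rw [ha, zero_div]), inv_div _ _, inv_div _ _⟩

theorem div (h : ReducesTo p x y) (h' : ReducesTo p x' y') (hy : y' ≠ 0) :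
    ReducesTo p (x / x') (y / y') := by
  simpa only [div_eq_mul_inv] using h.mul (h'.inv hy)

theorem pow (h : ReducesTo p x y) (n : ℕ) : ReducesTo p (x ^ n) (y ^ n) := by
  induction n with
  | zero => simpa using one
  | succ n ih => simpa only [pow_succ] using ih.mul h

theorem sum {ι : Type*} {s : Finset ι} {f : ι → ℚ} {g : ι → ZMod p}
    (h : ∀ i ∈ s, ReducesTo p (f i) (g i)) : ReducesTo p (∑ i ∈ s, f i) (∑ i ∈ s, g i) := by
  classical
  induction s using Finset.induction_on with
  | empty => simpa using zero
  | insert i s hi ih =>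
    rw [sum_insert hi, sum_insert hi]
    exact (h i (mem_insert_self _ _)).add (ih fun j hj => h j (mem_insert_of_mem hj))

theorem eq (h : ReducesTo p x y) (h' : ReducesTo p x y') : y = y' := by
  obtain ⟨a, b, hb, rfl, rfl⟩ := h
  obtain ⟨c, d, hd, he, rfl⟩ := h'
  rw [div_eq_div_iff (intCast_ne_zero hb) (intCast_ne_zero hd)] at he
  rw [div_eq_div_iff hb hd]
  exact_mod_cast congrArg (Int.cast : ℤ → ZMod p) (by exact_mod_cast he : a * d = c * b)

theorem ratCongr_one (h : ReducesTo p x y) (h' : ReducesTo p x' y) : ratCongr p 1 x x' := by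
  obtain ⟨a, b, hb, hx, hy⟩ := h.sub h'
  rw [sub_self, eq_comm, div_eq_zero_iff, or_iff_left hb, ZMod.intCast_zmod_eq_zero_iff_dvd] at hy
  obtain ⟨c, rfl⟩ := hy
  refine ⟨(c : ℚ) / b, by rw [hx]; push_cast; ring, fun hdvd => hb ?_⟩
  rw [ZMod.intCast_zmod_eq_zero_iff_dvd]
  have hden : (((c : ℚ) / b).den : ℤ) ∣ b := by
    rw [← Rat.divInt_eq_div]
    exact Rat.den_dvd c b
  exact (Int.natCast_dvd_natCast.2 hdvd).trans hden

end ReducesTo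

theorem reducesTo_harmonic {m : ℕ} (hm : m < p) :
    ReducesTo p (harmonic m) (nestedSum [altInv p 1 1] (m + 1)) := by
  have h : nestedSum [altInv p 1 1] (m + 1) = ∑ i ∈ range m, ((i + 1 : ℕ) : ZMod p)⁻¹ := by
    simp [nestedSum, altInv, sum_range_succ']
  rw [h]
  refine ReducesTo.sum fun i hi => (ReducesTo.natCast (i + 1)).inv ?_
  exact natCast_ne_zero_of_lt (by omega) (by rw [mem_range] at hi; omega)

theorem exists_reducesTo_bernoulli (n : ℕ) (hn : n + 1 < p) :
    ∃ y, ReducesTo p (bernoulli n) y := by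
  induction n using Nat.strong_induction_on with
  | _ n ih =>
    have hB : ∀ k, ∃ y, k < n → ReducesTo p (bernoulli k) y := fun k => by
      by_cases hk : k < n
      · obtain ⟨y, hy⟩ := ih k hk (by omega)
        exact ⟨y, fun _ => hy⟩
      · exact ⟨0, fun h => absurd h hk⟩
    choose β hβ using hB
    have hs := sum_bernoulli (n + 1)
    rw [sum_range_succ, Nat.choose_succ_self_right] at hs
    have hn0 : ((n + 1 : ℕ) : ℚ) ≠ 0 := by positivity
    have he : bernoulli n = ((if n + 1 = 1 then 1 else 0 : ℕ) -
        ∑ k ∈ range n, ((n + 1).choose k : ℚ) * bernoulli k) / (n + 1 : ℕ) := by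
      rw [eq_div_iff hn0]
      push_cast at hs ⊢
      linear_combination hs
    rw [he]
    exact ⟨_, ((ReducesTo.natCast _).sub (ReducesTo.sum fun k hk =>
      (ReducesTo.natCast _).mul (hβ k (mem_range.1 hk)))).div (ReducesTo.natCast _)
      (natCast_ne_zero_of_lt (by omega) hn)⟩

theorem sum_range_natCast_eq_sum_univ {M : Type*} [AddCommMonoid M] (f : ZMod p → M) :
    ∑ k ∈ range p, f k = ∑ x : ZMod p, f x := by
  refine sum_bij' (fun k _ => (k : ZMod p)) (fun x _ => x.val) (by simp)
    (fun x _ => mem_range.2 x.val_lt) (fun k hk => ZMod.val_cast_of_lt (mem_range.1 hk))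
    (by simp) (by simp)

theorem sum_range_pow_eq_zero {e : ℕ} (he : e < p - 1) :
    ∑ k ∈ range p, (k : ZMod p) ^ e = 0 := by
  rw [sum_range_natCast_eq_sum_univ (fun x : ZMod p => x ^ e)]
  exact FiniteField.sum_pow_lt_card_sub_one _ e (by rwa [ZMod.card])

theorem sum_range_pow_card_sub_one : ∑ k ∈ range p, (k : ZMod p) ^ (p - 1) = -1 := by
  have h1 := hp.out.two_le
  rw [sum_range_eq_sum_Ico_one _ (by simp; omega), sum_congr rfl (g := fun _ => 1)]
  · simp [Nat.cast_sub (by omega : 1 ≤ p)]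
  · intro k hk
    rw [mem_Ico] at hk
    exact ZMod.pow_card_sub_one_eq_one (natCast_ne_zero_of_lt (by omega) hk.2)

theorem inv_eq_pow_sub_two (hp2 : 2 < p) (x : ZMod p) : x⁻¹ = x ^ (p - 2) := by
  rcases eq_or_ne x 0 with rfl | hx
  · rw [inv_zero, zero_pow (by omega)]
  · have := ZMod.pow_card_sub_one_eq_one hx
    rw [show p - 1 = p - 2 + 1 by omega, pow_succ] at this
    exact (eq_inv_of_mul_eq_one_left this).symm

end Reduction

section Evaluation
variable {p : ℕ} [hp : Fact p.Prime]

theorem choose_card_sub_one (j : ℕ) (hj : j < p) :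
    (((p - 1).choose j : ℕ) : ZMod p) = (-1) ^ j := by
  induction j with
  | zero => simp
  | succ j ih =>
    have h1 : (p - 1).choose j + (p - 1).choose (j + 1) = p.choose (j + 1) := by
      rw [← Nat.choose_succ_succ, Nat.succ_eq_add_one, Nat.sub_add_cancel hp.out.one_le]
    have h2 : ((p.choose (j + 1) : ℕ) : ZMod p) = 0 := by
      rw [ZMod.natCast_eq_zero_iff]
      exact hp.out.dvd_choose_self (by omega) hj
    rw [← h1, Nat.cast_add, ih (by omega)] at h2
    rw [pow_succ]
    linear_combination h2

theorem reducesTo_fermatQ (hp2 : p ≠ 2) :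
    ReducesTo p (fermatQ p) (nestedSum [altInv p 1 (-1)] p / -2) := by
  obtain ⟨n, rfl⟩ : ∃ n, p = n + 1 := ⟨p - 1, (Nat.sub_add_cancel hp.out.one_le).symm⟩
  have hn0 : n ≠ 0 := by
    rintro rfl
    exact hp.out.one_lt.ne' rfl
  have hQ : fermatQ (n + 1) = (∑ j ∈ range n, (n.choose j : ℚ) / (j + 1 : ℕ)) / 2 := by
    have h1 : ∀ j ∈ range n, (n.choose j : ℚ) / (j + 1 : ℕ) =
        ((n + 1).choose (j + 1) : ℚ) / (n + 1 : ℕ) := by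
      intro j _
      rw [div_eq_div_iff (by positivity) (by positivity)]
      have := Nat.add_one_mul_choose_eq n j
      have h : ((n + 1 : ℕ) : ℚ) * n.choose j = (n + 1).choose (j + 1) * (j + 1 : ℕ) := by
        exact_mod_cast this
      linear_combination h
    have h2 : (2 : ℚ) ^ (n + 1) = ∑ j ∈ range n, ((n + 1).choose (j + 1) : ℚ) + 2 := by
      have := Nat.sum_range_choose (n + 1)
      rw [sum_range_succ, sum_range_succ'] at this
      simp only [Nat.choose_self, Nat.choose_zero_right] at this
      have h : ((2 ^ (n + 1) : ℕ) : ℚ) = _ := congrArg Nat.cast this.symm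
      push_cast at h
      linear_combination h
    rw [sum_congr rfl h1, ← sum_div, fermatQ, Nat.add_sub_cancel, eq_div_iff two_ne_zero,
      div_mul_eq_mul_div]
    congr 1
    rw [pow_succ] at h2
    linear_combination h2
  have hZ : nestedSum [altInv (n + 1) 1 (-1)] (n + 1) / -2 =
      (∑ j ∈ range n, (-1 : ZMod (n + 1)) ^ j / ((j + 1 : ℕ) : ZMod (n + 1))) / 2 := by
    simp only [nestedSum, sum_range_succ' _ n, altInv, Nat.cast_zero, inv_zero, pow_one, mul_zero,
      mul_one, add_zero]
    rw [div_neg, ← neg_div, ← sum_neg_distrib]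
    congr 1
    refine sum_congr rfl fun j _ => ?_
    rw [pow_succ]
    ring
  have h2 : (2 : ZMod (n + 1)) ≠ 0 := by
    have := natCast_ne_zero_of_lt (p := n + 1) (m := 2) (by norm_num) (by omega)
    exact_mod_cast this
  rw [hQ, hZ]
  refine (ReducesTo.sum fun j hj => ?_).div (ReducesTo.ofNat 2) h2
  rw [mem_range] at hj
  rw [← choose_card_sub_one j (by omega), Nat.add_sub_cancel]
  exact (ReducesTo.natCast _).div (ReducesTo.natCast _)
    (natCast_ne_zero_of_lt (by omega) (by omega))

/-- `∑_{j < k < p} 1 / (j k²)` is the residue class of `B_{p-3}`. -/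
theorem nestedSum_square_one_eq_bernoulli (hp3 : 3 < p) {y : ZMod p}
    (hy : ReducesTo p (bernoulli (p - 3)) y) :
    nestedSum [altInv p 2 1, altInv p 1 1] p = y := by
  obtain ⟨m, rfl⟩ : ∃ m, p = m + 3 := ⟨p - 3, by omega⟩
  have hB : ∀ i, ∃ y, i < m + 2 → ReducesTo (m + 3) (bernoulli i) y := fun i => by
    by_cases hi : i < m + 2
    · obtain ⟨y, hy⟩ := exists_reducesTo_bernoulli (p := m + 3) i (by omega)
      exact ⟨y, fun _ => hy⟩
    · exact ⟨0, fun h => absurd h hi⟩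
  choose β hβ using hB
  have hm2 : ((m + 2 : ℕ) : ZMod (m + 3)) = -1 := by
    have := ZMod.natCast_self (m + 3)
    push_cast at this ⊢
    linear_combination this
  have hinner : ∀ k : ℕ, nestedSum [altInv (m + 3) 1 1] k =
      ∑ i ∈ range (m + 2), -(β i * ((m + 2).choose i : ZMod (m + 3)) *
        (k : ZMod (m + 3)) ^ (m + 2 - i)) := by
    intro k
    have h1 : ReducesTo (m + 3) (∑ j ∈ range k, (j : ℚ) ^ (m + 1))
        (nestedSum [altInv (m + 3) 1 1] k) := by
      have : nestedSum [altInv (m + 3) 1 1] k = ∑ j ∈ range k, (j : ZMod (m + 3)) ^ (m + 1) := by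
        refine sum_congr rfl fun j _ => ?_
        simp only [altInv, one_pow, one_mul, pow_one, nestedSum, mul_one]
        exact inv_eq_pow_sub_two (by omega) _
      rw [this]
      exact ReducesTo.sum fun j _ => (ReducesTo.natCast j).pow _
    refine h1.eq ?_
    rw [sum_range_pow]
    refine ReducesTo.sum fun i hi => ?_
    have h2 := (((hβ i (mem_range.1 hi)).mul (ReducesTo.natCast ((m + 2).choose i))).mul
      ((ReducesTo.natCast k).pow (m + 2 - i))).div (ReducesTo.natCast (m + 2))
      (by rw [hm2]; exact neg_ne_zero.2 one_ne_zero)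
    rw [hm2, div_neg, div_one] at h2
    convert h2 using 2
    push_cast
    ring
  have hsum : ∀ i ∈ range (m + 2), ∑ k ∈ range (m + 3), altInv (m + 3) 2 1 k *
      -(β i * ((m + 2).choose i : ZMod (m + 3)) * (k : ZMod (m + 3)) ^ (m + 2 - i)) =
      if i = m then β m else 0 := by
    intro i hi
    rw [mem_range] at hi
    have hk : ∀ k : ℕ, altInv (m + 3) 2 1 k = (k : ZMod (m + 3)) ^ m := by
      intro k
      simp only [altInv, one_pow, one_mul]
      rcases eq_or_ne (k : ZMod (m + 3)) 0 with h | h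
      · rw [h, inv_zero, zero_pow two_ne_zero, zero_pow (by omega)]
      · have := ZMod.pow_card_sub_one_eq_one h
        rw [show m + 3 - 1 = m + 2 by omega, pow_add] at this
        rw [inv_pow]
        exact (eq_inv_of_mul_eq_one_left this).symm
    have hfac : ∑ k ∈ range (m + 3), altInv (m + 3) 2 1 k *
        -(β i * ((m + 2).choose i : ZMod (m + 3)) * (k : ZMod (m + 3)) ^ (m + 2 - i)) =
        -(β i * ((m + 2).choose i : ZMod (m + 3))) *
          ∑ k ∈ range (m + 3), (k : ZMod (m + 3)) ^ (m + (m + 2 - i)) := by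
      rw [mul_sum]
      refine sum_congr rfl fun k _ => ?_
      rw [hk, pow_add]
      ring
    rw [hfac]
    rcases lt_trichotomy i m with h | rfl | h
    · have : ∀ k ∈ range (m + 3), (k : ZMod (m + 3)) ^ (m + (m + 2 - i)) =
          (k : ZMod (m + 3)) ^ (m - i) := by
        intro k _
        rw [show m + (m + 2 - i) = (m + 3) + (m - i - 1) by omega, pow_add, ZMod.pow_card,
          ← pow_succ', show m - i - 1 + 1 = m - i by omega]
      rw [sum_congr rfl this, sum_range_pow_eq_zero (by omega), mul_zero, if_neg h.ne]
    · rw [show i + (i + 2 - i) = i + 3 - 1 by omega, sum_range_pow_card_sub_one, if_pos rfl]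
      have hc : ((i + 2).choose i : ZMod (i + 3)) = 1 := by
        have h2 : (2 : ZMod (i + 3)) ≠ 0 := by
          exact_mod_cast natCast_ne_zero_of_lt (p := i + 3) (m := 2) (by norm_num) (by omega)
        have h3 : (i + 2).choose i * 2 = (i + 2) * (i + 1) := by
          rw [Nat.choose_symm_add, Nat.choose_two_right, Nat.div_mul_cancel]
          · simp
          · exact (Nat.even_mul_pred_self _).two_dvd
        have h4 : (((i + 2).choose i * 2 : ℕ) : ZMod (i + 3)) =
            ((i + 2 : ℕ) : ZMod (i + 3)) * (i + 1) := by
          rw [h3]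
          push_cast
          ring
        rw [hm2] at h4
        apply mul_right_cancel₀ h2
        push_cast at h4 hm2
        linear_combination h4 - hm2
      rw [hc]
      ring
    · rw [sum_range_pow_eq_zero (by omega), mul_zero, if_neg h.ne']
  have hy' : y = β m := hy.eq (hβ m (by omega))
  rw [nestedSum.eq_2]
  simp only [hinner, mul_sum]
  rw [sum_comm, sum_congr rfl hsum, hy']
  simp

theorem nestedSum_succ_eq_add {k : ℕ} (hp2 : p ≠ 2) :
    nestedSum [altInv p 1 1] (k + 1) =
      nestedSum [altInv p 1 1] (2 * k + 1) + nestedSum [altInv p 1 (-1)] (2 * k + 1) := by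
  have h2 : (2 : ZMod p) ≠ 0 := by
    have := hp.out.two_le
    exact_mod_cast natCast_ne_zero_of_lt (p := p) (m := 2) (by norm_num) (by omega)
  induction k with
  | zero => simp [nestedSum, altInv]
  | succ k ih =>
    rw [nestedSum_cons_succ, ih, show 2 * (k + 1) + 1 = 2 * k + 1 + 1 + 1 by ring]
    simp only [nestedSum_cons_succ, nestedSum_nil, altInv, pow_succ, pow_mul]
    have h3 : (((2 * k + 1 + 1 : ℕ) : ZMod p))⁻¹ = 2⁻¹ * ((k + 1 : ℕ) : ZMod p)⁻¹ := by
      rw [← mul_inv]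
      congr 1
      push_cast
      ring
    rw [h3]
    simp only [one_pow, one_mul, mul_one, pow_zero, mul_neg, neg_mul]
    field_simp
    ring

theorem sum_harmonic_eq_nestedSum (hp2 : p ≠ 2) (n : ℕ) (hn : 2 * n < p) :
    ∑ k ∈ Icc 1 n, (0 / 2 - (k : ZMod p)) * nestedSum [altInv p 1 1] (k + 1) *
        nestedSum [altInv p 1 1] (2 * k + 1) / ((0 + 1 - 2 * (k : ZMod p)) * (0 + 2 * k)) * 4 =
      nestedSum [altInv p 2 1, altInv p 1 1] (2 * n + 1)
      + 2 * nestedSum [altInv p 1 1, altInv p 1 1, altInv p 1 1] (2 * n + 1)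
      + nestedSum [altInv p 1 1, altInv p 2 1] (2 * n + 1)
      + nestedSum [altInv p 2 1, altInv p 1 (-1)] (2 * n + 1)
      + nestedSum [altInv p 1 1, altInv p 1 (-1), altInv p 1 1] (2 * n + 1)
      + nestedSum [altInv p 1 1, altInv p 1 1, altInv p 1 (-1)] (2 * n + 1)
      + nestedSum [altInv p 1 1, altInv p 2 (-1)] (2 * n + 1)
      - nestedSum [altInv p 2 (-1), altInv p 1 1] (2 * n + 1)
      - 2 * nestedSum [altInv p 1 (-1), altInv p 1 1, altInv p 1 1] (2 * n + 1)
      - nestedSum [altInv p 1 (-1), altInv p 2 1] (2 * n + 1)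
      - nestedSum [altInv p 2 (-1), altInv p 1 (-1)] (2 * n + 1)
      - nestedSum [altInv p 1 (-1), altInv p 1 (-1), altInv p 1 1] (2 * n + 1)
      - nestedSum [altInv p 1 (-1), altInv p 1 1, altInv p 1 (-1)] (2 * n + 1)
      - nestedSum [altInv p 1 (-1), altInv p 2 (-1)] (2 * n + 1)
      - 6 * nestedSum [altInv p 1 (-1), altInv p 1 1] (2 * n + 1)
      - 2 * nestedSum [altInv p 1 (-1), altInv p 1 (-1)] (2 * n + 1)
      - 4 * nestedSum [altInv p 1 (-1)] (2 * n + 1)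
      - 4 * nestedSum [altInv p 2 (-1)] (2 * n + 1) := by
  induction n with
  | zero => simp [nestedSum, altInv]
  | succ n ih =>
    have h1 := natCast_ne_zero_of_lt (p := p) (m := 2 * n + 1) (by omega) (by omega)
    have h2 := natCast_ne_zero_of_lt (p := p) (m := 2 * n + 1 + 1) (by omega) (by omega)
    rw [sum_Icc_succ_top (by omega), ih (by omega), nestedSum_succ_eq_add hp2]
    have hodd : ∀ s, altInv p s (-1) (2 * n + 1) = - altInv p s 1 (2 * n + 1) := fun s => by
      simp [altInv, pow_succ, pow_mul]
    have heven : ∀ s, altInv p s (-1) (2 * n + 1 + 1) = altInv p s 1 (2 * n + 1 + 1) := fun s => by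
      simp [altInv, pow_succ, pow_mul]
    have hone : ∀ m : ℕ, altInv p 1 1 m = (m : ZMod p)⁻¹ := fun m => by simp [altInv]
    have htwo : ∀ m : ℕ, altInv p 2 1 m = (m : ZMod p)⁻¹ ^ 2 := fun m => by simp [altInv]
    have hfac : ∀ a b : ZMod p, (0 / 2 - ((n + 1 : ℕ) : ZMod p)) * a * b /
        ((0 + 1 - 2 * ((n + 1 : ℕ) : ZMod p)) * (0 + 2 * ((n + 1 : ℕ) : ZMod p))) * 4 =
        2 * a * b * ((2 * n + 1 : ℕ) : ZMod p)⁻¹ := by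
      intro a b
      have e1 : (0 + 1 - 2 * ((n + 1 : ℕ) : ZMod p)) = -((2 * n + 1 : ℕ) : ZMod p) := by
        push_cast
        ring
      have e2 : (0 + 2 * ((n + 1 : ℕ) : ZMod p)) = ((2 * n + 1 + 1 : ℕ) : ZMod p) := by
        push_cast
        ring
      have e3 : (0 / 2 - ((n + 1 : ℕ) : ZMod p)) * 2 = -((2 * n + 1 + 1 : ℕ) : ZMod p) := by
        push_cast
        ring
      rw [e1, e2]
      field_simp
      linear_combination (-2) * a * b * e3
    rw [hfac, show 2 * (n + 1) + 1 = 2 * n + 1 + 1 + 1 by ring]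
    have hpf : ((2 * n + 1 : ℕ) : ZMod p)⁻¹ * ((2 * n + 1 + 1 : ℕ) : ZMod p)⁻¹ =
        ((2 * n + 1 : ℕ) : ZMod p)⁻¹ - ((2 * n + 1 + 1 : ℕ) : ZMod p)⁻¹ := by
      field_simp
      push_cast
      ring
    generalize 2 * n + 1 = m at *
    simp only [nestedSum_cons_succ, nestedSum_nil, hodd, heven, hone, htwo]
    have haa := nestedSum_stuffle_one_one (altInv p 1 1) (altInv p 1 1) m
    have hab := nestedSum_stuffle_one_one (altInv p 1 1) (altInv p 1 (-1)) m
    simp only [altInv_mul, one_mul, Nat.reduceAdd] at haa hab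
    generalize (m : ZMod p)⁻¹ = u at *
    generalize ((m + 1 : ℕ) : ZMod p)⁻¹ = v at *
    generalize nestedSum [altInv p 1 1] m = a at *
    generalize nestedSum [altInv p 1 (-1)] m = b at *
    linear_combination (2 * (a + b) + 4 * (a + u) + 4 * v + 4) * hpf + 2 * u * haa + 2 * u * hab

theorem nestedSum_one_eq_zero (hp2 : p ≠ 2) : nestedSum [altInv p 1 1] p = 0 := by
  have h2 : (2 : ZMod p) ≠ 0 := by
    have := hp.out.two_le
    exact_mod_cast natCast_ne_zero_of_lt (p := p) (m := 2) (by norm_num) (by omega)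
  have h : nestedSum [altInv p 1 1] p = -1 * nestedSum [altInv p 1 1] p :=
    sum_altInv_mul_comp_sub hp2 (one_pow 2) fun _ => 1
  refine (mul_eq_zero.1 ?_).resolve_left h2
  linear_combination h

theorem nestedSum_weight_two (hp3 : 3 < p) :
    nestedSum [altInv p 2 (-1)] p = 0 ∧
    nestedSum [altInv p 1 1, altInv p 1 1] p = 0 ∧
    4 * nestedSum [altInv p 1 (-1), altInv p 1 1] p = nestedSum [altInv p 1 (-1)] p ^ 2 ∧
    4 * nestedSum [altInv p 1 1, altInv p 1 (-1)] p = -nestedSum [altInv p 1 (-1)] p ^ 2 ∧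
    2 * nestedSum [altInv p 1 (-1), altInv p 1 (-1)] p = nestedSum [altInv p 1 (-1)] p ^ 2 := by
  have hp2 : p ≠ 2 := by omega
  have h2 : (2 : ZMod p) ≠ 0 := by
    exact_mod_cast natCast_ne_zero_of_lt (p := p) (m := 2) (by norm_num) (by omega)
  have h3 : (3 : ZMod p) ≠ 0 := by
    exact_mod_cast natCast_ne_zero_of_lt (p := p) (m := 3) (by norm_num) (by omega)
  have e1 : (1 : ZMod p) ^ 2 = 1 := one_pow 2
  have em : (-1 : ZMod p) ^ 2 = 1 := by ring
  have h1 := nestedSum_one_eq_zero hp2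
  have s1 := nestedSum_stuffle_one_one (altInv p 1 1) (altInv p 1 1) p
  have s2 := nestedSum_stuffle_one_one (altInv p 1 1) (altInv p 1 (-1)) p
  have s3 := nestedSum_stuffle_one_one (altInv p 1 (-1)) (altInv p 1 (-1)) p
  have t1 := nestedSum_shuffle_one_one hp2 e1 e1
  have t2 := nestedSum_shuffle_one_one hp2 e1 em
  have t3 := nestedSum_shuffle_one_one hp2 em e1
  simp only [altInv_mul, h1, one_mul, mul_one, neg_mul, mul_neg, neg_neg, zero_mul,
    Nat.reduceAdd] at s1 s2 s3 t1 t2 t3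
  have k1 : nestedSum [altInv p 1 1, altInv p 1 1] p = 0 := by
    refine (mul_eq_zero.1 ?_).resolve_left h3
    linear_combination -t1
  have k2 : 2 * nestedSum [altInv p 1 (-1), altInv p 1 (-1)] p =
      nestedSum [altInv p 1 (-1)] p ^ 2 := by
    linear_combination -s3 + s1 + 2 * k1
  have k3 : 4 * nestedSum [altInv p 1 1, altInv p 1 (-1)] p =
      -nestedSum [altInv p 1 (-1)] p ^ 2 := by
    linear_combination -2 * t2 - k2
  have k4 : 4 * nestedSum [altInv p 1 (-1), altInv p 1 1] p =
      nestedSum [altInv p 1 (-1)] p ^ 2 := by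
    linear_combination 4 * t3 + k3 + 2 * k2
  refine ⟨?_, k1, k4, k3, k2⟩
  refine (mul_eq_zero.1 ?_).resolve_left (mul_ne_zero h2 h2)
  linear_combination -4 * s2 - k3 - k4

theorem nestedSum_combination_eq (hp3 : 3 < p) :
    nestedSum [altInv p 2 1, altInv p 1 1] p
      + 2 * nestedSum [altInv p 1 1, altInv p 1 1, altInv p 1 1] p
      + nestedSum [altInv p 1 1, altInv p 2 1] p
      + nestedSum [altInv p 2 1, altInv p 1 (-1)] p
      + nestedSum [altInv p 1 1, altInv p 1 (-1), altInv p 1 1] p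
      + nestedSum [altInv p 1 1, altInv p 1 1, altInv p 1 (-1)] p
      + nestedSum [altInv p 1 1, altInv p 2 (-1)] p
      - nestedSum [altInv p 2 (-1), altInv p 1 1] p
      - 2 * nestedSum [altInv p 1 (-1), altInv p 1 1, altInv p 1 1] p
      - nestedSum [altInv p 1 (-1), altInv p 2 1] p
      - nestedSum [altInv p 2 (-1), altInv p 1 (-1)] p
      - nestedSum [altInv p 1 (-1), altInv p 1 (-1), altInv p 1 1] p
      - nestedSum [altInv p 1 (-1), altInv p 1 1, altInv p 1 (-1)] p
      - nestedSum [altInv p 1 (-1), altInv p 2 (-1)] p =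
      -(nestedSum [altInv p 1 (-1)] p ^ 3) / 4 +
        5 / 4 * nestedSum [altInv p 2 1, altInv p 1 1] p := by
  have hp2 : p ≠ 2 := by omega
  have h2 : (2 : ZMod p) ≠ 0 := by
    exact_mod_cast natCast_ne_zero_of_lt (p := p) (m := 2) (by norm_num) (by omega)
  have h3 : (3 : ZMod p) ≠ 0 := by
    exact_mod_cast natCast_ne_zero_of_lt (p := p) (m := 3) (by norm_num) (by omega)
  have h96 : (96 : ZMod p) ≠ 0 := by
    rw [show (96 : ZMod p) = 2 ^ 5 * 3 by norm_num]
    exact mul_ne_zero (pow_ne_zero _ h2) h3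
  have e1 : (1 : ZMod p) ^ 2 = 1 := one_pow 2
  have em : (-1 : ZMod p) ^ 2 = 1 := by ring
  have h1 := nestedSum_one_eq_zero hp2
  obtain ⟨-, w11, wm1, w1m, wmm⟩ := nestedSum_weight_two hp3
  -- stuffle relations, with letters listed from the largest index
  have s_m1m := nestedSum_stuffle_one_two (altInv p 1 (-1)) (altInv p 1 1) (altInv p 1 (-1)) p
  have s_11m := nestedSum_stuffle_one_two (altInv p 1 1) (altInv p 1 1) (altInv p 1 (-1)) p
  have s_1m1 := nestedSum_stuffle_one_two (altInv p 1 1) (altInv p 1 (-1)) (altInv p 1 1) p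
  have s_mmm := nestedSum_stuffle_one_two (altInv p 1 (-1)) (altInv p 1 (-1)) (altInv p 1 (-1)) p
  have s_1mm := nestedSum_stuffle_one_two (altInv p 1 1) (altInv p 1 (-1)) (altInv p 1 (-1)) p
  have s_mm1 := nestedSum_stuffle_one_two (altInv p 1 (-1)) (altInv p 1 (-1)) (altInv p 1 1) p
  have s_m11 := nestedSum_stuffle_one_two (altInv p 1 (-1)) (altInv p 1 1) (altInv p 1 1) p
  -- shuffle relations
  have t_111 := nestedSum_shuffle_one_two hp2 e1 e1 e1
  have t_mm1 := nestedSum_shuffle_one_two hp2 em em e1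
  have t_1mm := nestedSum_shuffle_one_two hp2 e1 em em
  have t_11m := nestedSum_shuffle_one_two hp2 e1 e1 em
  have t_1m1 := nestedSum_shuffle_one_two hp2 e1 em e1
  have q_1m := nestedSum_shuffle_square hp2 e1 em
  have q_mm := nestedSum_shuffle_square hp2 em em
  simp only [altInv_mul, h1, mul_one, mul_neg, neg_neg, zero_mul,
    Nat.reduceAdd] at s_m1m s_11m s_1m1 s_mmm s_1mm s_mm1 s_m11
  simp only [one_mul, mul_one, neg_mul, mul_neg, neg_neg] at t_111 t_mm1 t_1mm t_11m t_1m1 q_1m q_mm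
  have h4 : (4 : ZMod p) ≠ 0 := by
    rw [show (4 : ZMod p) = 2 ^ 2 by norm_num]
    exact pow_ne_zero _ h2
  have hd : ∀ a b : ZMod p, 96 * (-a / 4 + 5 / 4 * b) = -24 * a + 120 * b := by
    intro a b
    field_simp
    ring
  refine mul_left_cancel₀ h96 ?_
  rw [hd]
  linear_combination -48 * t_111 - 96 * s_m1m - 144 * s_11m + 60 * q_1m + 48 * s_1m1
    - 12 * s_mmm + 132 * s_1mm + 24 * s_mm1 + 56 * t_mm1 + 60 * q_mm - 72 * s_m11
    - 14 * t_1mm + 88 * t_11m + 36 * t_1m1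
    + nestedSum [altInv p 1 (-1)] p * (24 * w1m + 6 * wmm - 6 * wm1 + 72 * w11)

end Evaluation

theorem sum_Hk_H2k_congr (p : ℕ) (hp : p.Prime) (hp3 : 3 < p) :
    ratCongr p 1
      (∑ k ∈ Finset.Icc 1 ((p - 1) / 2),
        ((p : ℚ) / 2 - k) * harmonic k * harmonic (2 * k) /
          (((p : ℚ) + 1 - 2 * k) * ((p : ℚ) + 2 * k)))
      (2 * fermatQ p - (5 / 2) * fermatQ p ^ 2 + (1 / 2) * fermatQ p ^ 3 +
        (5 / 16) * bernoulli (p - 3)) := by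
  have : Fact p.Prime := ⟨hp⟩
  have hp2 : p ≠ 2 := by omega
  have h2 : (2 : ZMod p) ≠ 0 := by
    exact_mod_cast natCast_ne_zero_of_lt (p := p) (m := 2) (by norm_num) (by omega)
  have h4 : (4 : ZMod p) ≠ 0 := by
    rw [show (4 : ZMod p) = 2 ^ 2 by norm_num]
    exact pow_ne_zero _ h2
  have h16 : (16 : ZMod p) ≠ 0 := by
    rw [show (16 : ZMod p) = 2 ^ 4 by norm_num]
    exact pow_ne_zero _ h2
  obtain ⟨n, hn⟩ := hp.odd_of_ne_two hp2
  rw [show (p - 1) / 2 = n by omega]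
  obtain ⟨β, hβ⟩ := exists_reducesTo_bernoulli (p := p) (p - 3) (by omega)
  have hQ := reducesTo_fermatQ (p := p) hp2
  have hright := ((((ReducesTo.ofNat 2).mul hQ).sub
    (((ReducesTo.ofNat 5).div (ReducesTo.ofNat 2) h2).mul (hQ.pow 2))).add
    ((ReducesTo.one.div (ReducesTo.ofNat 2) h2).mul (hQ.pow 3))).add
    (((ReducesTo.ofNat 5).div (ReducesTo.ofNat 16) h16).mul hβ)
  have hp0 : ReducesTo p (p : ℚ) 0 := by simpa using ReducesTo.natCast (p := p) p
  have hleft : ReducesTo p (∑ k ∈ Finset.Icc 1 n,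
      ((p : ℚ) / 2 - k) * harmonic k * harmonic (2 * k) /
        (((p : ℚ) + 1 - 2 * k) * ((p : ℚ) + 2 * k)))
      (∑ k ∈ Icc 1 n, (0 / 2 - (k : ZMod p)) * nestedSum [altInv p 1 1] (k + 1) *
        nestedSum [altInv p 1 1] (2 * k + 1) /
          ((0 + 1 - 2 * (k : ZMod p)) * (0 + 2 * (k : ZMod p)))) := by
    refine ReducesTo.sum fun k hk => ?_
    rw [mem_Icc] at hk
    have hk' := ReducesTo.natCast (p := p) k
    refine ((((hp0.div (ReducesTo.ofNat 2) h2).sub hk').mul (reducesTo_harmonic (by omega))).mul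
      (reducesTo_harmonic (by omega))).div (((hp0.add ReducesTo.one).sub
      ((ReducesTo.ofNat 2).mul hk')).mul (hp0.add ((ReducesTo.ofNat 2).mul hk'))) ?_
    have d1 := natCast_ne_zero_of_lt (p := p) (m := 2 * k - 1) (by omega) (by omega)
    have d2 := natCast_ne_zero_of_lt (p := p) (m := 2 * k) (by omega) (by omega)
    rw [Nat.cast_sub (by omega)] at d1
    push_cast at d1 d2
    refine mul_ne_zero (fun h => d1 ?_) (by rwa [zero_add])
    linear_combination -h
  refine hleft.ratCongr_one ?_
  convert hright using 1
  have hsum := sum_harmonic_eq_nestedSum (p := p) hp2 n (by omega)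
  rw [← sum_mul, ← hn, nestedSum_combination_eq hp3,
    nestedSum_square_one_eq_bernoulli hp3 hβ] at hsum
  obtain ⟨wM, -, wm1, -, wmm⟩ := nestedSum_weight_two hp3
  rw [wM] at hsum
  refine mul_right_cancel₀ h4 (hsum.trans ?_)
  generalize nestedSum [altInv p 1 (-1)] p = A at *
  have hA : (2 * (A / -2) - 5 / 2 * (A / -2) ^ 2 + 1 / 2 * (A / -2) ^ 3 + 5 / 16 * β) * 4 =
      -(A ^ 3) / 4 + 5 / 4 * β - 4 * A - 3 / 2 * A ^ 2 - A ^ 2 := by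
    field_simp
    ring
  rw [hA]
  have h6 : 6 * nestedSum [altInv p 1 (-1), altInv p 1 1] p = 3 / 2 * A ^ 2 := by
    field_simp
    linear_combination 3 * wm1
  linear_combination -h6 - wmm
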